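/- arXiv:2406.05017 — 2 statements merged into one kernel-verified Lean document; each statement's English description precedes it below -/
import Mathlib

section
/- Let ξ = (√3·σ̄/κ)·√((d+1)·log(1+2T/d) + log(2/δ)). On the event that ‖θ̂_{t,j} − θ_j‖_{V_j^{(t)}} ≤ ξ holds for all t ∈ [T₀, T] and all j ∈ [N], the cumulative regret of the UCR algorithm satisfies R_T ≤ R_{T₀} + 2·M₁·ξ·∑_{t=T₀}^{T} ∑_{k=1}^{K} c_k·‖Z_{t,q_t(k)}‖_{(V_{q_t(k)}^{(t)})⁻¹}. -/
open Matrix Finset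

noncomputable section

/-- Rescaled position of display slot `k` among `K` slots: `(k+1)/K - 1/2`. -/
def ppos (K : ℕ) (k : Fin K) : ℝ := ((k : ℕ) + 1) / K - 1 / 2

/-- Augmented feature `(position, context) ∈ ℝ^{d+1}`. -/
def aug (d : ℕ) (p : ℝ) (x : Fin d → ℝ) : Fin (d + 1) → ℝ := Fin.cons p x

/-- Euclidean dot product. -/
def dotp {n : ℕ} (u v : Fin n → ℝ) : ℝ := ∑ i, u i * v i

/-- `‖v‖_M = √(vᵀ M v)`. -/
def matNorm {n : ℕ} (M : Matrix (Fin n) (Fin n) ℝ) (v : Fin n → ℝ) : ℝ :=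
  Real.sqrt (dotp v (M.mulVec v))

/-- The expected user satisfaction `r(x, f) = H(∑_k g_k(A'(θ_{f(k)}ᵀ (pos k, x))))` of the
ranking action that displays item `f k` in slot `k`. -/
def sat (d K N : ℕ) (A H : ℝ → ℝ) (g : Fin K → ℝ → ℝ)
    (θ : Fin N → Fin (d + 1) → ℝ) (x : Fin d → ℝ) (f : Fin K → Fin N) : ℝ :=
  H (∑ k, g k (deriv A (dotp (θ (f k)) (aug d (ppos K k) x))))

/-- The upper-confidence index of a ranking action. -/
def Uidx (d K N : ℕ) (A H : ℝ → ℝ) (g : Fin K → ℝ → ℝ)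
    (θh : Fin N → Fin (d + 1) → ℝ) (Vs : Fin N → Matrix (Fin (d + 1)) (Fin (d + 1)) ℝ)
    (ξ : ℝ) (x : Fin d → ℝ) (f : Fin K → Fin N) : ℝ :=
  H (∑ k, g k (deriv A (dotp (θh (f k)) (aug d (ppos K k) x) +
    ξ * matNorm ((Vs (f k))⁻¹) (aug d (ppos K k) x))))

/-- Cumulative regret of a realized trajectory over the first `n` rounds, against the best
selection-and-ranking (injection from slots to items) for each context. -/
def regSum (d K N : ℕ) (A H : ℝ → ℝ) (g : Fin K → ℝ → ℝ)
    (θ : Fin N → Fin (d + 1) → ℝ) (x : ℕ → Fin d → ℝ)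
    (act : ℕ → Fin K → Fin N) (n : ℕ) : ℝ :=
  ∑ t ∈ Finset.Icc 1 n,
    ((⨆ f : Fin K ↪ Fin N, sat d K N A H g θ (x t) ⇑f) -
      sat d K N A H g θ (x t) (act t))

/-!
By Cauchy–Schwarz in the inner product of `V`, the event `‖θ̂ - θ‖_V ≤ ξ` says that every linear
score `θᵀz` is estimated by `θ̂ᵀz` up to the width `ξ‖z‖_{V⁻¹}`. Adding the width therefore gives an
index above the true satisfaction (optimism), and the index exceeds the true satisfaction of a
ranking by at most the effect of twice the width in each slot, which Lipschitz continuity controls.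
Since the chosen ranking maximizes the index, its regret is at most that excess.
-/

open scoped NNReal

section CoordLipschitz

variable {ι : Type*} [DecidableEq ι] {E : ι → Type*} [∀ i, PseudoMetricSpace (E i)]
  {α : Type*} [PseudoMetricSpace α]

/-- `F` is `c i`-Lipschitz in its `i`-th argument when the other arguments are held fixed, for
every `i`. -/
def CoordLipschitz (c : ι → ℝ≥0) (F : (∀ i, E i) → α) : Prop :=
  ∀ i x, LipschitzWith (c i) fun a => F (Function.update x i a)

theorem CoordLipschitz.of_dist_le {c : ι → ℝ≥0} {F : (∀ i, E i) → α}
    (h : ∀ i x y, (∀ l, l ≠ i → x l = y l) → dist (F x) (F y) ≤ c i * dist (x i) (y i)) :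
    CoordLipschitz c F := fun i x => LipschitzWith.of_dist_le_mul fun a b => by
  simpa only [Function.update_self] using
    h i (Function.update x i a) (Function.update x i b) fun l hl => by
      rw [Function.update_of_ne hl, Function.update_of_ne hl]

theorem CoordLipschitz.dist_piecewise_le {c : ι → ℝ≥0} {F : (∀ i, E i) → α}
    (hF : CoordLipschitz c F) (x y : ∀ i, E i) (s : Finset ι) :
    dist (F (s.piecewise x y)) (F y) ≤ ∑ i ∈ s, c i * dist (x i) (y i) := by
  induction s using Finset.induction_on with
  | empty => simp
  | insert i s hi ih =>
    have hstep : dist (F ((insert i s).piecewise x y)) (F (s.piecewise x y)) ≤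
        c i * dist (x i) (y i) := by
      have hy : Function.update (s.piecewise x y) i (y i) = s.piecewise x y := by
        rw [Function.update_eq_self_iff, Finset.piecewise_eq_of_notMem _ _ _ hi]
      simpa only [Finset.piecewise_insert, hy] using
        (hF i (s.piecewise x y)).dist_le_mul (x i) (y i)
    rw [Finset.sum_insert hi]
    exact (dist_triangle _ _ _).trans (add_le_add hstep ih)

theorem CoordLipschitz.dist_le_sum [Fintype ι] {c : ι → ℝ≥0} {F : (∀ i, E i) → α}
    (hF : CoordLipschitz c F) (x y : ∀ i, E i) :
    dist (F x) (F y) ≤ ∑ i, c i * dist (x i) (y i) := by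
  simpa only [Finset.piecewise_univ] using hF.dist_piecewise_le x y Finset.univ

end CoordLipschitz

section WeightedNorm

theorem sq_dotProduct_mulVec_le {R n : Type*} [CommRing R] [LinearOrder R] [IsStrictOrderedRing R]
    [StarRing R] [TrivialStar R] [Fintype n] {V : Matrix n n R} (hV : V.PosSemidef) (u w : n → R) :
    (u ⬝ᵥ V *ᵥ w) ^ 2 ≤ (u ⬝ᵥ V *ᵥ u) * (w ⬝ᵥ V *ᵥ w) := by
  classical
  have hnonneg : ∀ v, 0 ≤ Matrix.toBilin' V v v := fun v => by
    simpa only [Matrix.toBilin'_apply', star_trivial] using hV.dotProduct_mulVec_nonneg v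
  have hsymm : (Matrix.toBilin' V).IsSymm :=
    Matrix.isSymm_toBilin'_iff_isSymm.2 <|
      (Matrix.conjTranspose_eq_transpose_of_trivial V).symm.trans hV.isHermitian
  simpa only [Matrix.toBilin'_apply'] using
    LinearMap.BilinForm.apply_sq_le_of_symm _ hnonneg ⟨hsymm.eq⟩ u w

theorem sq_dotProduct_le_mul_inv {R n : Type*} [Field R] [LinearOrder R] [IsStrictOrderedRing R]
    [StarRing R] [TrivialStar R] [Fintype n] [DecidableEq n] {V : Matrix n n R} (hV : V.PosDef)
    (u z : n → R) : (u ⬝ᵥ z) ^ 2 ≤ (u ⬝ᵥ V *ᵥ u) * (z ⬝ᵥ V⁻¹ *ᵥ z) := by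
  have hz : V *ᵥ V⁻¹ *ᵥ z = z := by
    have hdet : IsUnit V.det := (Matrix.isUnit_iff_isUnit_det V).1 hV.isUnit
    rw [Matrix.mulVec_mulVec, Matrix.mul_nonsing_inv _ hdet, Matrix.one_mulVec]
  simpa only [hz, dotProduct_comm (V⁻¹ *ᵥ z)] using
    sq_dotProduct_mulVec_le hV.posSemidef u (V⁻¹ *ᵥ z)

variable {n : ℕ} {V : Matrix (Fin n) (Fin n) ℝ}

theorem matNorm_nonneg (V : Matrix (Fin n) (Fin n) ℝ) (v : Fin n → ℝ) : 0 ≤ matNorm V v :=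
  Real.sqrt_nonneg _

theorem abs_dotp_le_matNorm_mul_matNorm_inv (hV : V.PosDef) (u z : Fin n → ℝ) :
    |dotp u z| ≤ matNorm V u * matNorm V⁻¹ z := by
  have hu : 0 ≤ dotp u (V *ᵥ u) := hV.posSemidef.dotProduct_mulVec_nonneg u
  rw [matNorm, matNorm, ← Real.sqrt_mul hu]
  exact Real.abs_le_sqrt (sq_dotProduct_le_mul_inv hV u z)

theorem abs_dotp_sub_dotp_le_of_matNorm_sub_le (hV : V.PosDef) {θ θ' : Fin n → ℝ} {ξ : ℝ}
    (h : matNorm V (θ' - θ) ≤ ξ) (z : Fin n → ℝ) :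
    |dotp θ' z - dotp θ z| ≤ ξ * matNorm V⁻¹ z := by
  have hsub : dotp θ' z - dotp θ z = dotp (θ' - θ) z := (sub_dotProduct θ' θ z).symm
  rw [hsub]
  exact (abs_dotp_le_matNorm_mul_matNorm_inv hV _ z).trans
    (mul_le_mul_of_nonneg_right h (matNorm_nonneg _ z))

end WeightedNorm

section Regret

variable {d K N : ℕ} {A H : ℝ → ℝ} {g : Fin K → ℝ → ℝ} {c : Fin K → ℝ≥0} {M : ℝ≥0}
  {θ θh : Fin N → Fin (d + 1) → ℝ} {W : Fin N → Matrix (Fin (d + 1)) (Fin (d + 1)) ℝ} {ξ : ℝ}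

theorem sat_le_Uidx (hA' : Monotone (deriv A)) (hH : Monotone H) (hg : ∀ k, Monotone (g k))
    (hwidth : ∀ j z, |dotp (θh j) z - dotp (θ j) z| ≤ ξ * matNorm (W j)⁻¹ z)
    (x : Fin d → ℝ) (f : Fin K → Fin N) :
    sat d K N A H g θ x f ≤ Uidx d K N A H g θh W ξ x f := by
  refine hH (Finset.sum_le_sum fun k _ => hg k (hA' ?_))
  linarith [neg_le_of_abs_le (hwidth (f k) (aug d (ppos K k) x))]

theorem Uidx_sub_sat_le (hF : CoordLipschitz c fun μ : Fin K → ℝ => H (∑ k, g k (μ k)))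
    (hA' : LipschitzWith M (deriv A))
    (hwidth : ∀ j z, |dotp (θh j) z - dotp (θ j) z| ≤ ξ * matNorm (W j)⁻¹ z)
    (x : Fin d → ℝ) (f : Fin K → Fin N) :
    Uidx d K N A H g θh W ξ x f - sat d K N A H g θ x f ≤
      2 * M * ξ * ∑ k, c k * matNorm (W (f k))⁻¹ (aug d (ppos K k) x) := by
  let z : Fin K → Fin (d + 1) → ℝ := fun k => aug d (ppos K k) x
  let w : Fin K → ℝ := fun k => ξ * matNorm (W (f k))⁻¹ (z k)
  have hslot : ∀ k, dist (deriv A (dotp (θh (f k)) (z k) + w k)) (deriv A (dotp (θ (f k)) (z k))) ≤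
      M * (2 * w k) := fun k => by
    refine hA'.dist_le_mul_of_le (abs_le.2 ?_)
    have := abs_le.1 (hwidth (f k) (z k))
    constructor <;> linarith
  calc Uidx d K N A H g θh W ξ x f - sat d K N A H g θ x f
      ≤ ∑ k, c k * dist (deriv A (dotp (θh (f k)) (z k) + w k))
          (deriv A (dotp (θ (f k)) (z k))) :=
        (le_abs_self _).trans (hF.dist_le_sum _ _)
    _ ≤ ∑ k, c k * (M * (2 * w k)) :=
        Finset.sum_le_sum fun k _ => mul_le_mul_of_nonneg_left (hslot k) (c k).2
    _ = 2 * M * ξ * ∑ k, c k * matNorm (W (f k))⁻¹ (z k) := by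
        rw [Finset.mul_sum]
        exact Finset.sum_congr rfl fun k _ => by ring

/-- Regret of the ranking action `a` in a single round with context `x`: the summand of the
cumulative regret `regSum`. For `K ≤ N` the supremum is a maximum over finitely many rankings; for
`N < K` there are none and it takes the junk value `0`. -/
def roundRegret (d K N : ℕ) (A H : ℝ → ℝ) (g : Fin K → ℝ → ℝ) (θ : Fin N → Fin (d + 1) → ℝ)
    (x : Fin d → ℝ) (a : Fin K → Fin N) : ℝ :=
  (⨆ f : Fin K ↪ Fin N, sat d K N A H g θ x f) - sat d K N A H g θ x a

theorem roundRegret_le (hKN : K ≤ N) (hA'mono : Monotone (deriv A)) (hH : Monotone H)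
    (hg : ∀ k, Monotone (g k))
    (hF : CoordLipschitz c fun μ : Fin K → ℝ => H (∑ k, g k (μ k)))
    (hA' : LipschitzWith M (deriv A))
    (hwidth : ∀ j z, |dotp (θh j) z - dotp (θ j) z| ≤ ξ * matNorm (W j)⁻¹ z)
    {x : Fin d → ℝ} {a : Fin K → Fin N}
    (ha : ∀ f : Fin K ↪ Fin N, Uidx d K N A H g θh W ξ x f ≤ Uidx d K N A H g θh W ξ x a) :
    roundRegret d K N A H g θ x a ≤
      2 * M * ξ * ∑ k, c k * matNorm (W (a k))⁻¹ (aug d (ppos K k) x) := by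
  have : Nonempty (Fin K ↪ Fin N) := ⟨Fin.castLEEmb hKN⟩
  have hoptimism : ⨆ f : Fin K ↪ Fin N, sat d K N A H g θ x f ≤ Uidx d K N A H g θh W ξ x a :=
    ciSup_le fun f => (sat_le_Uidx hA'mono hH hg hwidth x f).trans (ha f)
  exact (sub_le_sub_right hoptimism _).trans (Uidx_sub_sat_le hF hA' hwidth x a)

theorem regSum_eq_add_sum_roundRegret {m n : ℕ} (hmn : m ≤ n) (x : ℕ → Fin d → ℝ)
    (act : ℕ → Fin K → Fin N) :
    regSum d K N A H g θ x act n = regSum d K N A H g θ x act m +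
      ∑ t ∈ Finset.Ioc m n, roundRegret d K N A H g θ (x t) (act t) :=
  (Finset.sum_Ioc_consecutive (fun t => roundRegret d K N A H g θ (x t) (act t))
    m.zero_le hmn).symm

theorem stmt_6_general {T T₀ : ℕ} (hKN : K ≤ N) (hT₀T : T₀ ≤ T)
    {x : ℕ → Fin d → ℝ} {act : ℕ → Fin K → Fin N} {θhat : ℕ → Fin N → Fin (d + 1) → ℝ}
    {V : ℕ → Fin N → Matrix (Fin (d + 1)) (Fin (d + 1)) ℝ}
    (hVpd : ∀ t ∈ Finset.Icc T₀ T, ∀ j, (V t j).PosDef)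
    (_hA : Differentiable ℝ A) (hA'mono : Monotone (deriv A)) (hH : Monotone H)
    (hg : ∀ k, Monotone (g k)) (hA' : LipschitzWith M (deriv A))
    (hF : CoordLipschitz c fun μ : Fin K → ℝ => H (∑ k, g k (μ k)))
    (hevent : ∀ t ∈ Finset.Icc T₀ T, ∀ j, matNorm (V t j) (θhat t j - θ j) ≤ ξ)
    (hUCR : ∀ t ∈ Finset.Icc T₀ T, ∀ f : Fin K ↪ Fin N,
      Uidx d K N A H g (θhat t) (V t) ξ (x t) f ≤
        Uidx d K N A H g (θhat t) (V t) ξ (x t) (act t)) :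
    regSum d K N A H g θ x act T ≤ regSum d K N A H g θ x act T₀ +
      2 * M * ξ * ∑ t ∈ Finset.Icc T₀ T, ∑ k,
        c k * matNorm (V t (act t k))⁻¹ (aug d (ppos K k) (x t)) := by
  have hwidth : ∀ t ∈ Finset.Icc T₀ T, ∀ j z,
      |dotp (θhat t j) z - dotp (θ j) z| ≤ ξ * matNorm (V t j)⁻¹ z := fun t ht j =>
    abs_dotp_sub_dotp_le_of_matNorm_sub_le (hVpd t ht j) (hevent t ht j)
  let B : ℕ → ℝ := fun t =>
    2 * M * ξ * ∑ k, c k * matNorm (V t (act t k))⁻¹ (aug d (ppos K k) (x t))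
  have hB : ∀ t ∈ Finset.Icc T₀ T, 0 ≤ B t := fun t ht => by
    simp only [B, Finset.mul_sum]
    refine Finset.sum_nonneg fun k _ => ?_
    have hξ : 0 ≤ ξ := (matNorm_nonneg _ _).trans (hevent t ht (act t k))
    have := matNorm_nonneg (V t (act t k))⁻¹ (aug d (ppos K k) (x t))
    positivity
  rw [regSum_eq_add_sum_roundRegret hT₀T, Finset.mul_sum]
  refine add_le_add le_rfl ?_
  calc ∑ t ∈ Finset.Ioc T₀ T, roundRegret d K N A H g θ (x t) (act t)
      ≤ ∑ t ∈ Finset.Ioc T₀ T, B t := Finset.sum_le_sum fun t ht =>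
        have ht := Finset.Ioc_subset_Icc_self ht
        roundRegret_le hKN hA'mono hH hg hF hA' (hwidth t ht) (hUCR t ht)
    _ ≤ ∑ t ∈ Finset.Icc T₀ T, B t :=
        Finset.sum_le_sum_of_subset_of_nonneg Finset.Ioc_subset_Icc_self fun t ht _ => hB t ht

end Regret

/-- Lemma 4.3: with
`ξ = (√3 σ̄/κ)√((d+1)log(1+2T/d) + log(2/δ))`, on any trajectory on which the event
`‖θ̂_{t,j} - θ_j‖_{V_j^{(t)}} ≤ ξ` holds for all `t ∈ [T₀, T]` and all `j ∈ [N]`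
(with the design matrices well-conditioned), the cumulative regret of UCR satisfies
`R_T ≤ R_{T₀} + 2 M₁ ξ ∑_{t=T₀}^T ∑_k c_k ‖Z_{t,q_t(k)}‖_{(V_{q_t(k)}^{(t)})⁻¹}`. -/
theorem stmt_6 (d K N T T₀ : ℕ) (hd : 0 < d) (hK : 0 < K) (hN : 0 < N) (hKN : K ≤ N)
    (hT₀1 : 1 ≤ T₀) (hT₀T : T₀ ≤ T)
    (sigb κ δ M₁ ξ : ℝ) (hsigb : 0 < sigb) (hκpos : 0 < κ) (hδ : 0 < δ) (hδ1 : δ < 1)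
    (hξ : ξ = Real.sqrt 3 * sigb / κ *
      Real.sqrt (((d : ℝ) + 1) * Real.log (1 + 2 * (T : ℝ) / d) + Real.log (2 / δ)))
    (A H : ℝ → ℝ) (g : Fin K → ℝ → ℝ) (c : Fin K → ℝ)
    (x : ℕ → Fin d → ℝ)                  -- realized contexts
    (act : ℕ → Fin K → Fin N)            -- realized actions: item shown in each slot
    (θ : Fin N → Fin (d + 1) → ℝ)        -- true item parameters
    (θhat : ℕ → Fin N → Fin (d + 1) → ℝ) -- estimates
    (V : ℕ → Fin N → Matrix (Fin (d + 1)) (Fin (d + 1)) ℝ)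
    (hinj : ∀ t, Function.Injective (act t))
    -- the design matrices of the trajectory
    (hV : ∀ t j, V t j = ∑ τ ∈ Finset.Ico 1 t, ∑ k : Fin K,
      if act τ k = j then
        Matrix.vecMulVec (aug d (ppos K k) (x τ)) (aug d (ppos K k) (x τ))
      else 0)
    (hVpd : ∀ t ∈ Finset.Icc T₀ T, ∀ j : Fin N, (V t j).PosDef)
    -- Assumption 2: monotonicity, `A''` bounded by `M₁`, coordinatewise Lipschitz constants
    (hA1 : Differentiable ℝ A) (hA2 : Differentiable ℝ (deriv A))
    (hA'mono : Monotone (deriv A)) (hHmono : Monotone H) (hgmono : ∀ k, Monotone (g k))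
    (hM₁ : ∀ y : ℝ, |deriv (deriv A) y| ≤ M₁)
    (hc : ∀ k, 0 ≤ c k)
    (hLip : ∀ (k : Fin K) (μ μ' : Fin K → ℝ), (∀ l, l ≠ k → μ l = μ' l) →
      |H (∑ l, g l (μ l)) - H (∑ l, g l (μ' l))| ≤ c k * |μ k - μ' k|)
    -- the event of Proposition 4.2: uniform estimation-error bound
    (hevent : ∀ t ∈ Finset.Icc T₀ T, ∀ j : Fin N,
      matNorm (V t j) (θhat t j - θ j) ≤ ξ)
    -- UCR: for t ∈ [T₀, T] the chosen action maximizes the upper-confidence index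
    (hUCR : ∀ t ∈ Finset.Icc T₀ T, ∀ f : Fin K ↪ Fin N,
      Uidx d K N A H g (θhat t) (V t) ξ (x t) ⇑f ≤
        Uidx d K N A H g (θhat t) (V t) ξ (x t) (act t)) :
    regSum d K N A H g θ x act T ≤
      regSum d K N A H g θ x act T₀ +
        2 * M₁ * ξ * ∑ t ∈ Finset.Icc T₀ T, ∑ k : Fin K,
          c k * matNorm ((V t (act t k))⁻¹) (aug d (ppos K k) (x t)) := by
  lift M₁ to ℝ≥0 using (abs_nonneg _).trans (hM₁ 0)
  lift c to Fin K → ℝ≥0 using hc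
  exact stmt_6_general hKN hT₀T hVpd hA1 hA'mono hHmono hgmono
    (lipschitzWith_of_nnnorm_deriv_le hA2 hM₁) (.of_dist_le hLip) hevent hUCR

end
end

section
/- Let z₁, …, z_m ∈ ℝⁿ be such that V := ∑_{i=1}^m z_i z_iᵀ is positive definite, let A : ℝ → ℝ be twice differentiable, and let θ, θ′ ∈ ℝⁿ and κ > 0 be such that A″(ηᵀ z_i) ≥ κ for every i and every η on the line segment between θ and θ′. Define g(η) := ∑_{i=1}^m A′(ηᵀ z_i)·z_i. Then ‖g(θ) − g(θ′)‖²_{V⁻¹} ≥ κ²·‖θ − θ′‖²_V, where ‖x‖²_B := xᵀ B x. Moreover, ‖g(θ) − g(θ′)‖²_{V⁻¹} ≥ κ²·λ_min(V)·‖θ − θ′‖², where λ_min(V) is the minimum eigenvalue of V. -/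
open Matrix Finset

/-!
Each summand of `g` is strongly monotone along the segment, by the one-dimensional mean value
theorem; summing over the observations gives `κ ‖θ - θ'‖²_V ≤ ⟪θ - θ', g θ - g θ'⟫`. The norms
`‖·‖_V` and `‖·‖_{V⁻¹}` are dual to each other, so Young's inequality
`2 ⟪x, y⟫ ≤ ‖x‖²_V + ‖y‖²_{V⁻¹}` at `x = κ (θ - θ')` and `y = g θ - g θ'` turns this into the
lower bound on `‖g θ - g θ'‖_{V⁻¹}`. Working with this inner product avoids the averaged Hessian `M`
and the Loewner inequality `M V⁻¹ M ⪰ κ² V`.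
-/

section MeanValue

lemma mul_sq_sub_le_mul_sub_of_le_deriv {D : Set ℝ} (hD : Convex ℝ D) {f : ℝ → ℝ}
    (hf : ContinuousOn f D) (hf' : DifferentiableOn ℝ f (interior D)) {c : ℝ}
    (hc : ∀ t ∈ interior D, c ≤ deriv f t) {x y : ℝ} (hx : x ∈ D) (hy : y ∈ D) :
    c * (x - y) ^ 2 ≤ (f x - f y) * (x - y) := by
  wlog hyx : y ≤ x generalizing x y
  · linarith [this hy hx (le_of_not_ge hyx)]
  calc c * (x - y) ^ 2 = c * (x - y) * (x - y) := by ring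
    _ ≤ (f x - f y) * (x - y) := mul_le_mul_of_nonneg_right
      (hD.mul_sub_le_image_sub_of_le_deriv hf hf' hc y hy x hx hyx) (sub_nonneg.2 hyx)

lemma mul_sq_sub_le_mul_sub_of_le_deriv_on_segment {E : Type*} [AddCommGroup E] [Module ℝ E]
    (φ : E →ₗ[ℝ] ℝ) {f : ℝ → ℝ} {θ θ' : E} {c : ℝ}
    (hf : ∀ η ∈ segment ℝ θ θ', DifferentiableAt ℝ f (φ η))
    (hc : ∀ η ∈ segment ℝ θ θ', c ≤ deriv f (φ η)) :
    c * (φ θ - φ θ') ^ 2 ≤ (f (φ θ) - f (φ θ')) * (φ θ - φ θ') := by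
  have hφ : φ '' segment ℝ θ θ' = segment ℝ (φ θ) (φ θ') := image_segment ℝ φ.toAffineMap θ θ'
  have hdiff : ∀ t ∈ segment ℝ (φ θ) (φ θ'), DifferentiableAt ℝ f t := by
    rwa [← hφ, Set.forall_mem_image]
  have hderiv : ∀ t ∈ segment ℝ (φ θ) (φ θ'), c ≤ deriv f t := by
    rwa [← hφ, Set.forall_mem_image]
  exact mul_sq_sub_le_mul_sub_of_le_deriv (convex_segment _ _)
    (fun t ht => (hdiff t ht).continuousAt.continuousWithinAt)
    (fun t ht => (hdiff t (interior_subset ht)).differentiableWithinAt)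
    (fun t ht => hderiv t (interior_subset ht)) (left_mem_segment ..) (right_mem_segment ..)

end MeanValue

section QuadraticForm

variable {n : Type*} [Fintype n] [DecidableEq n]

/-- **Young's inequality** for dual norms, obtained by expanding `0 ≤ ‖V x - y‖²_{V⁻¹}`. -/
lemma dotProduct_add_dotProduct_le_of_posDef {K : Type*} [Field K] [PartialOrder K] [StarRing K]
    [IsOrderedAddMonoid K] {V : Matrix n n K} (hV : V.PosDef) (x y : n → K) :
    star x ⬝ᵥ y + star y ⬝ᵥ x ≤ star x ⬝ᵥ V *ᵥ x + star y ⬝ᵥ V⁻¹ *ᵥ y := by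
  have hdet : IsUnit V.det := (isUnit_iff_isUnit_det V).1 hV.isUnit
  have hinv : V⁻¹ *ᵥ V *ᵥ x = x := by rw [mulVec_mulVec, nonsing_inv_mul _ hdet, one_mulVec]
  have hadj (u : n → K) : star (V *ᵥ x) ⬝ᵥ u = star x ⬝ᵥ V *ᵥ u := by
    rw [star_mulVec, hV.isHermitian.eq, dotProduct_mulVec]
  have hcancel : star x ⬝ᵥ V *ᵥ V⁻¹ *ᵥ y = star x ⬝ᵥ y := by
    rw [mulVec_mulVec, mul_nonsing_inv _ hdet, one_mulVec]
  have hexpand : star (V *ᵥ x - y) ⬝ᵥ V⁻¹ *ᵥ (V *ᵥ x - y) =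
      star x ⬝ᵥ V *ᵥ x + star y ⬝ᵥ V⁻¹ *ᵥ y - (star x ⬝ᵥ y + star y ⬝ᵥ x) := by
    rw [mulVec_sub, hinv, star_sub, sub_dotProduct, hadj, mulVec_sub, dotProduct_sub,
      dotProduct_sub, hcancel]
    ring
  exact sub_nonneg.1 (hexpand ▸ hV.inv.posSemidef.dotProduct_mulVec_nonneg (V *ᵥ x - y))

lemma sq_mul_dotProduct_mulVec_le_of_mul_le_dotProduct {V : Matrix n n ℝ} (hV : V.PosDef)
    {x y : n → ℝ} {c : ℝ} (hc : 0 ≤ c) (hxy : c * (x ⬝ᵥ V *ᵥ x) ≤ x ⬝ᵥ y) :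
    c ^ 2 * (x ⬝ᵥ V *ᵥ x) ≤ y ⬝ᵥ V⁻¹ *ᵥ y := by
  have hyoung := dotProduct_add_dotProduct_le_of_posDef hV (c • x) y
  simp only [star_trivial, mulVec_smul, smul_dotProduct, dotProduct_smul, smul_eq_mul,
    dotProduct_comm y x] at hyoung
  linarith [mul_le_mul_of_nonneg_left hxy hc]

open scoped ComplexOrder MatrixOrder in
lemma iInf_eigenvalues_mul_dotProduct_le {𝕜 : Type*} [RCLike 𝕜] {V : Matrix n n 𝕜}
    (hV : V.IsHermitian) (x : n → 𝕜) :
    (⨅ i, hV.eigenvalues i : ℝ) • (star x ⬝ᵥ x) ≤ star x ⬝ᵥ V *ᵥ x := by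
  have hle : algebraMap ℝ (Matrix n n 𝕜) (⨅ i, hV.eigenvalues i) ≤ V := by
    refine algebraMap_le_of_le_spectrum ?_ hV
    rw [hV.spectrum_real_eq_range_eigenvalues, Set.forall_mem_range]
    exact ciInf_le (Set.finite_range _).bddBelow
  rw [Algebra.algebraMap_eq_smul_one, Matrix.le_iff] at hle
  have hnonneg := hle.dotProduct_mulVec_nonneg x
  rwa [sub_mulVec, dotProduct_sub, smul_mulVec, one_mulVec, dotProduct_smul,
    sub_nonneg] at hnonneg

end QuadraticForm

section GLM

variable {ι n : Type*} [Fintype ι] [Fintype n]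

/-- The Gram matrix `V = ∑ i, zᵢ zᵢᵀ` of the feature vectors `zᵢ`, which are the rows of the design
matrix. -/
def designGram {R : Type*} [NonUnitalNonAssocSemiring R] (z : ι → n → R) : Matrix n n R :=
  ∑ i, vecMulVec (z i) (z i)

/-- The gradient at `η` of the generalized linear model potential `η ↦ ∑ i, Aᵢ (ηᵀ zᵢ)`, encoded
through the mean functions `f i = Aᵢ'`. -/
def glmGradient {R : Type*} [NonUnitalNonAssocSemiring R] (f : ι → R → R) (z : ι → n → R)
    (η : n → R) : n → R :=
  ∑ i, f i (η ⬝ᵥ z i) • z i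

lemma dotProduct_designGram_mulVec {R : Type*} [CommSemiring R] (z : ι → n → R) (x : n → R) :
    x ⬝ᵥ designGram z *ᵥ x = ∑ i, (x ⬝ᵥ z i) ^ 2 := by
  simp only [designGram, sum_mulVec, dotProduct_sum, vecMulVec_mulVec, dotProduct_smul,
    op_smul_eq_smul, smul_eq_mul, dotProduct_comm (z _) x, sq]

lemma dotProduct_glmGradient_sub {R : Type*} [CommRing R] (f : ι → R → R) (z : ι → n → R)
    (x θ θ' : n → R) :
    x ⬝ᵥ (glmGradient f z θ - glmGradient f z θ') =
      ∑ i, (f i (θ ⬝ᵥ z i) - f i (θ' ⬝ᵥ z i)) * (x ⬝ᵥ z i) := by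
  simp only [glmGradient, ← sum_sub_distrib, ← sub_smul, dotProduct_sum, dotProduct_smul,
    smul_eq_mul]

variable {f : ι → ℝ → ℝ} {z : ι → n → ℝ} {θ θ' : n → ℝ} {κ : ℝ}

lemma mul_designGram_le_dotProduct_glmGradient_sub
    (hf : ∀ i, ∀ η ∈ segment ℝ θ θ', DifferentiableAt ℝ (f i) (η ⬝ᵥ z i))
    (hf' : ∀ i, ∀ η ∈ segment ℝ θ θ', κ ≤ deriv (f i) (η ⬝ᵥ z i)) :
    κ * ((θ - θ') ⬝ᵥ designGram z *ᵥ (θ - θ')) ≤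
      (θ - θ') ⬝ᵥ (glmGradient f z θ - glmGradient f z θ') := by
  rw [dotProduct_designGram_mulVec, dotProduct_glmGradient_sub, mul_sum]
  refine sum_le_sum fun i _ => ?_
  rw [sub_dotProduct]
  exact mul_sq_sub_le_mul_sub_of_le_deriv_on_segment ((dotProductBilin ℝ ℝ).flip (z i))
    (hf i) (hf' i)

theorem stmt_9_general [DecidableEq n] (hκ : 0 ≤ κ) (hV : (designGram z).PosDef)
    (hf : ∀ i, ∀ η ∈ segment ℝ θ θ', DifferentiableAt ℝ (f i) (η ⬝ᵥ z i))
    (hf' : ∀ i, ∀ η ∈ segment ℝ θ θ', κ ≤ deriv (f i) (η ⬝ᵥ z i)) :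
    κ ^ 2 * ((θ - θ') ⬝ᵥ designGram z *ᵥ (θ - θ')) ≤
        (glmGradient f z θ - glmGradient f z θ') ⬝ᵥ
          (designGram z)⁻¹ *ᵥ (glmGradient f z θ - glmGradient f z θ') ∧
      κ ^ 2 * (⨅ i, hV.1.eigenvalues i) * (∑ i, (θ i - θ' i) ^ 2) ≤
        (glmGradient f z θ - glmGradient f z θ') ⬝ᵥ
          (designGram z)⁻¹ *ᵥ (glmGradient f z θ - glmGradient f z θ') := by
  have hgram := sq_mul_dotProduct_mulVec_le_of_mul_le_dotProduct hV hκ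
    (mul_designGram_le_dotProduct_glmGradient_sub hf hf')
  have hrayleigh : (⨅ i, hV.1.eigenvalues i) * ∑ i, (θ i - θ' i) ^ 2 ≤
      (θ - θ') ⬝ᵥ designGram z *ᵥ (θ - θ') := by
    simpa [dotProduct, sq] using iInf_eigenvalues_mul_dotProduct_le hV.1 (θ - θ')
  refine ⟨hgram, le_trans ?_ hgram⟩
  rw [mul_assoc]
  exact mul_le_mul_of_nonneg_left hrayleigh (sq_nonneg κ)

end GLM

/-- for `V = ∑ zᵢzᵢᵀ ≻ 0`, `A` twice differentiable with
`A''(ηᵀzᵢ) ≥ κ` on the segment between `θ` and `θ'`, the GLM gradient map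
`g η = ∑ A'(ηᵀzᵢ) zᵢ` satisfies `‖g θ - g θ'‖²_{V⁻¹} ≥ κ² ‖θ - θ'‖²_V` and
`‖g θ - g θ'‖²_{V⁻¹} ≥ κ² λ_min(V) ‖θ - θ'‖²`. -/
theorem stmt_9 {n m : ℕ} (z : Fin m → Fin n → ℝ) (A : ℝ → ℝ)
    (hA : ContDiff ℝ 2 A) (θ θ' : Fin n → ℝ) (κ : ℝ) (hκ : 0 < κ)
    (V : Matrix (Fin n) (Fin n) ℝ)
    (hVdef : V = ∑ i, Matrix.vecMulVec (z i) (z i))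
    (hVpd : V.PosDef)
    (hA'' : ∀ (i : Fin m), ∀ η ∈ segment ℝ θ θ', κ ≤ deriv (deriv A) (η ⬝ᵥ z i))
    (g : (Fin n → ℝ) → (Fin n → ℝ))
    (hg : g = fun η => ∑ i, deriv A (η ⬝ᵥ z i) • z i) :
    κ ^ 2 * ((θ - θ') ⬝ᵥ V.mulVec (θ - θ')) ≤ (g θ - g θ') ⬝ᵥ V⁻¹.mulVec (g θ - g θ') ∧
    κ ^ 2 * (⨅ i, hVpd.1.eigenvalues i) * (∑ i, (θ i - θ' i) ^ 2) ≤
      (g θ - g θ') ⬝ᵥ V⁻¹.mulVec (g θ - g θ') := by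
  subst hVdef hg
  exact stmt_9_general hκ.le hVpd (fun _ _ _ => hA.differentiable_deriv_two _) hA''
end
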